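/- For a subshift of finite type σ : Σ_A → Σ_A determined by a 0-1 transition matrix A, the topological entropy of σ equals the logarithm of the spectral radius of A. -/

import Mathlib

open Filter

noncomputable section

/-- `W` is `(n, ε)`-separated for `f`. -/
def IsSep {X : Type*} [PseudoMetricSpace X] (f : X → X) (n : ℕ) (ε : ℝ) (W : Set X) : Prop :=
  ∀ x ∈ W, ∀ y ∈ W, x ≠ y → ∃ k, k < n ∧ ε < dist (f^[k] x) (f^[k] y)

/-- Maximal cardinality of an `(n, ε)`-separated set. -/
def sepCount {X : Type*} [PseudoMetricSpace X] (f : X → X) (n : ℕ) (ε : ℝ) : ℕ :=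
  sSup {m : ℕ | ∃ W : Finset X, IsSep f n ε (W : Set X) ∧ W.card = m}

/-- Topological entropy via separated sets. -/
def topEnt {X : Type*} [PseudoMetricSpace X] (f : X → X) : EReal :=
  ⨆ (ε : ℝ) (_ : 0 < ε),
    Filter.limsup (fun n : ℕ => ((Real.log (sepCount f n ε) / n : ℝ) : EReal)) atTop

/-- The subshift of finite type determined by a `0`-`1` matrix `A`. -/
def SigmaA (N : ℕ) (A : Matrix (Fin N) (Fin N) ℝ) : Type :=
  {x : ℤ → Fin N // ∀ i : ℤ, A (x i) (x (i + 1)) = 1}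

/-- The shift map on `Σ_A`. -/
def shiftA (N : ℕ) (A : Matrix (Fin N) (Fin N) ℝ) : SigmaA N A → SigmaA N A :=
  fun x => ⟨fun i => x.1 (i + 1), fun i => x.2 (i + 1)⟩

lemma mv_apply {N : ℕ} (A : Matrix (Fin N) (Fin N) ℝ) (v : Fin N → ℝ) (j : Fin N) :
    (A.mulVec v) j = ∑ l, A j l * v l := rfl

lemma wsum {N : ℕ} (A : Matrix (Fin N) (Fin N) ℝ) (n : ℕ) (u v : Fin N → ℝ) :
    ∑ w : Fin (n+1) → Fin N, u (w 0) * (∏ k : Fin n, A (w k.castSucc) (w k.succ)) * v (w (Fin.last n))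
      = u ⬝ᵥ ((A ^ n).mulVec v) := by
  induction n generalizing u with
  | zero =>
    simp only [dotProduct, pow_zero, Matrix.one_mulVec]
    rw [← (Equiv.funUnique (Fin 1) (Fin N)).symm.sum_comp]
    simp
  | succ n ih =>
    rw [pow_succ', ← Matrix.mulVec_mulVec, Matrix.dotProduct_mulVec, ← ih]
    rw [← (Fin.consEquiv (fun _ => Fin N)).sum_comp, Fintype.sum_prod_type, Finset.sum_comm]
    refine Finset.sum_congr rfl fun w _ => ?_
    simp only [Matrix.vecMul, dotProduct, Finset.sum_mul]
    refine Finset.sum_congr rfl fun a _ => ?_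
    simp only [Fin.consEquiv, Equiv.coe_fn_mk, Fin.prod_univ_succ (n := n), Fin.castSucc_zero, Fin.cons_zero,
      Fin.cons_succ, ← Fin.succ_last, ← Fin.succ_castSucc]
    ring

lemma pow_nonneg' {N : ℕ} (A : Matrix (Fin N) (Fin N) ℝ) (h : ∀ i j, 0 ≤ A i j) (n : ℕ) :
    ∀ i j, 0 ≤ (A ^ n) i j := by
  induction n with
  | zero => intro i j; simp only [pow_zero, Matrix.one_apply]; split_ifs <;> norm_num
  | succ n ih =>
    intro i j
    rw [pow_succ, Matrix.mul_apply]
    exact Finset.sum_nonneg fun l _ => mul_nonneg (ih _ _) (h _ _)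

lemma right_ext {N : ℕ} (A : Matrix (Fin N) (Fin N) ℝ) (h01 : ∀ i j, A i j = 0 ∨ A i j = 1) :
    ∃ K : ℕ, ∀ j, ((A ^ K).mulVec 1) j ≠ 0 → ∃ x : ℕ → Fin N, x 0 = j ∧ ∀ k, A (x k) (x (k+1)) = 1 := by
  classical
  have hA : ∀ i j, 0 ≤ A i j := fun i j => by rcases h01 i j with h | h <;> simp [h]
  let R : ℕ → Finset (Fin N) := fun k => Finset.univ.filter fun j => ((A ^ k).mulVec 1) j ≠ 0
  have hR : Antitone R := by
    refine antitone_nat_of_succ_le fun k j hj => ?_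
    simp only [R, Finset.mem_filter, Finset.mem_univ, true_and] at hj ⊢
    intro h0
    apply hj
    rw [pow_succ, ← Matrix.mulVec_mulVec]
    have h1 : ∀ l, (A ^ k) j l = 0 := by
      intro l
      rw [mv_apply] at h0
      have := (Finset.sum_eq_zero_iff_of_nonneg (fun l _ => by
        simpa using pow_nonneg' A hA k j l)).1 h0 l (Finset.mem_univ _)
      simpa using this
    simp [Matrix.mulVec, dotProduct, h1]
  obtain ⟨K, hK⟩ := WellFoundedGT.monotone_chain_condition (α := (Finset (Fin N))ᵒᵈ) ⟨fun k => OrderDual.toDual (R k), fun a b h => hR h⟩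
  refine ⟨K, ?_⟩
  have hs : ∀ j : R K, ∃ l : R K, A j l = 1 := by
    rintro ⟨j, hj⟩
    have hj' : j ∈ R (K+1) := by
      have := hK (K+1) (by omega)
      have h2 : R K = R (K+1) := this
      rwa [← h2]
    by_contra hcon
    push Not at hcon
    simp only [R, Finset.mem_filter, Finset.mem_univ, true_and] at hj'
    apply hj'
    rw [pow_succ', ← Matrix.mulVec_mulVec]
    rw [mv_apply]
    refine Finset.sum_eq_zero fun l _ => ?_
    by_cases hl : l ∈ R K
    · have := hcon ⟨l, hl⟩
      rcases h01 j l with h | h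
      · simp [h]
      · exact absurd h this
    · simp only [R, Finset.mem_filter, Finset.mem_univ, true_and, not_not] at hl
      rw [hl, mul_zero]
  choose s hs using hs
  intro j hj
  refine ⟨fun k => ((s^[k] ⟨j, by simpa [R] using hj⟩ : R K) : Fin N), rfl, fun k => ?_⟩
  simp only [Function.iterate_succ_apply']
  exact hs _

/-- Words of length `n+1` occurring in the subshift. -/
def wordsA (N : ℕ) (A : Matrix (Fin N) (Fin N) ℝ) (n : ℕ) : Finset (Fin (n+1) → Fin N) := by
  classical
  exact Finset.univ.filter fun w => ∃ x : SigmaA N A, ∀ k : Fin (n+1), w k = x.1 ((k : ℕ) : ℤ)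

lemma mem_wordsA {N : ℕ} {A : Matrix (Fin N) (Fin N) ℝ} {n : ℕ} {w : Fin (n+1) → Fin N} :
    w ∈ wordsA N A n ↔ ∃ x : SigmaA N A, ∀ k : Fin (n+1), w k = x.1 ((k : ℕ) : ℤ) := by
  simp [wordsA]

/-- Sum of entries of `A^n`. -/
def entS {N : ℕ} (A : Matrix (Fin N) (Fin N) ℝ) (n : ℕ) : ℝ := 1 ⬝ᵥ ((A ^ n).mulVec 1)

lemma words_le {N : ℕ} (A : Matrix (Fin N) (Fin N) ℝ) (h01 : ∀ i j, A i j = 0 ∨ A i j = 1) (n : ℕ) :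
    ((wordsA N A n).card : ℝ) ≤ entS A n := by
  have hA : ∀ i j, 0 ≤ A i j := fun i j => by rcases h01 i j with h | h <;> simp [h]
  rw [entS, ← wsum]
  simp only [Pi.one_apply, one_mul, mul_one]
  calc ((wordsA N A n).card : ℝ) = ∑ w ∈ wordsA N A n, (1 : ℝ) := by simp
    _ = ∑ w ∈ wordsA N A n, ∏ k : Fin n, A (w k.castSucc) (w k.succ) := by
      refine Finset.sum_congr rfl fun w hw => ?_
      obtain ⟨x, hx⟩ := mem_wordsA.1 hw
      symm
      refine Finset.prod_eq_one fun k _ => ?_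
      rw [hx, hx]
      simpa using x.2 (k : ℕ)
    _ ≤ _ := Finset.sum_le_univ_sum_of_nonneg fun w => Finset.prod_nonneg fun _ _ => hA _ _

lemma glue {N : ℕ} (A : Matrix (Fin N) (Fin N) ℝ) (n : ℕ) (w : Fin (n+1) → Fin N)
    (hw : ∀ k : Fin n, A (w k.castSucc) (w k.succ) = 1)
    (y : ℕ → Fin N) (hy0 : y 0 = w 0) (hy : ∀ k, A (y (k+1)) (y k) = 1)
    (z : ℕ → Fin N) (hz0 : z 0 = w (Fin.last n)) (hz : ∀ k, A (z k) (z (k+1)) = 1) :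
    w ∈ wordsA N A n := by
  rw [mem_wordsA]
  let x : ℤ → Fin N := fun i => if i < 0 then y (-i).toNat else
    if h : i.toNat < n + 1 then w ⟨i.toNat, h⟩ else z (i.toNat - n)
  refine ⟨⟨x, fun i => ?_⟩, fun k => ?_⟩
  · by_cases h1 : i < -1
    · have e : (-i).toNat = (-(i+1)).toNat + 1 := by omega
      simp only [x]
      rw [if_pos (by omega), if_pos (by omega), e]
      exact hy _
    · by_cases h2 : i = -1
      · subst h2
        have := hy 0
        rw [hy0] at this
        simpa [x] using this
      · by_cases h3 : i.toNat < n
        · have := hw ⟨i.toNat, h3⟩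
          simp only [x]
          rw [if_neg (by omega), if_neg (by omega), dif_pos (by omega), dif_pos (by omega)]
          have e1 : (⟨(i + 1).toNat, by omega⟩ : Fin (n + 1)) = Fin.succ ⟨i.toNat, h3⟩ := by
            apply Fin.ext
            change (i + 1).toNat = i.toNat + 1
            omega
          rw [e1]
          exact this
        · by_cases h4 : i.toNat = n
          · simp only [x]
            rw [if_neg (by omega), if_neg (by omega), dif_pos (by omega), dif_neg (by omega)]
            have := hz 0
            rw [hz0] at this
            convert this using 3
            · ext; simp [h4]
            · omega
          · simp only [x]
            rw [if_neg (by omega), if_neg (by omega), dif_neg (by omega), dif_neg (by omega)]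
            have := hz (i.toNat - n)
            rw [show (i + 1).toNat - n = i.toNat - n + 1 by omega]
            exact this
  · have h1 : ¬ (((k : ℕ) : ℤ) < 0) := by omega
    have h2 : (k : ℕ) ≤ n := by omega
    simp [x, h1, h2]

lemma le_words {N : ℕ} (A : Matrix (Fin N) (Fin N) ℝ) (h01 : ∀ i j, A i j = 0 ∨ A i j = 1) :
    ∃ (c : ℕ) (C : ℝ), 0 < C ∧ ∀ n, entS A (n + c) ≤ C * (wordsA N A n).card := by
  classical
  have hA : ∀ i j, 0 ≤ A i j := fun i j => by rcases h01 i j with h | h <;> simp [h]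
  obtain ⟨K, hK⟩ := right_ext A h01
  obtain ⟨L, hL⟩ := right_ext A.transpose (fun i j => h01 j i)
  set v := (A ^ K).mulVec 1 with hv
  set u := (A.transpose ^ L).mulVec 1 with hu
  have hv0 : ∀ j, 0 ≤ v j := fun j => by
    rw [hv, mv_apply]
    refine Finset.sum_nonneg fun l _ => ?_
    simpa using pow_nonneg' A hA K j l
  have hu0 : ∀ j, 0 ≤ u j := fun j => by
    rw [hu, mv_apply]
    refine Finset.sum_nonneg fun l _ => ?_
    simpa using pow_nonneg' A.transpose (fun i j => hA j i) L j l
  have hvb : ∀ j, v j ≤ ∑ i, v i := fun j => Finset.single_le_sum (fun i _ => hv0 i) (Finset.mem_univ j)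
  have hub : ∀ j, u j ≤ ∑ i, u i := fun j => Finset.single_le_sum (fun i _ => hu0 i) (Finset.mem_univ j)
  have hvs : 0 ≤ ∑ i, v i := Finset.sum_nonneg fun i _ => hv0 i
  have hus : 0 ≤ ∑ i, u i := Finset.sum_nonneg fun i _ => hu0 i
  refine ⟨L + K, (∑ i, u i) * (∑ i, v i) + 1, by positivity, fun n => ?_⟩
  have e : entS A (n + (L + K)) = u ⬝ᵥ ((A ^ n).mulVec v) := by
    rw [entS, hu, hv, ← Matrix.transpose_pow, Matrix.mulVec_transpose, ← Matrix.dotProduct_mulVec,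
      Matrix.mulVec_mulVec, Matrix.mulVec_mulVec, ← pow_add, ← pow_add]
    congr 3
    omega
  rw [e, ← wsum]
  have : ∀ w : Fin (n+1) → Fin N, u (w 0) * (∏ k : Fin n, A (w k.castSucc) (w k.succ)) * v (w (Fin.last n))
      ≤ if w ∈ wordsA N A n then ((∑ i, u i) * (∑ i, v i) + 1) else 0 := by
    intro w
    have hp : (∏ k : Fin n, A (w k.castSucc) (w k.succ)) ≤ 1 :=
      Finset.prod_le_one (fun _ _ => hA _ _) fun k _ => by
        rcases h01 (w k.castSucc) (w k.succ) with h | h <;> simp [h]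
    have hp0 : 0 ≤ (∏ k : Fin n, A (w k.castSucc) (w k.succ)) := Finset.prod_nonneg fun _ _ => hA _ _
    split_ifs with h
    · calc _ ≤ (∑ i, u i) * 1 * (∑ i, v i) := by
            gcongr
            · exact hv0 _
            · exact hub _
            · exact hvb _
        _ ≤ _ := by linarith
    · by_contra hne
      push Not at hne
      have h1 : u (w 0) ≠ 0 := fun h => by simp [h] at hne
      have h2 : v (w (Fin.last n)) ≠ 0 := fun h => by simp [h] at hne
      have h3 : ∀ k : Fin n, A (w k.castSucc) (w k.succ) = 1 := by
        intro k
        rcases h01 (w k.castSucc) (w k.succ) with h | h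
        · rw [Finset.prod_eq_zero (Finset.mem_univ k) h] at hne
          simp at hne
        · exact h
      obtain ⟨y, hy0, hy⟩ := hL _ h1
      obtain ⟨z, hz0, hz⟩ := hK _ h2
      exact h (glue A n w h3 y hy0 hy z hz0 hz)
  refine (Finset.sum_le_sum fun w _ => this w).trans ?_
  rw [Finset.sum_ite_mem, Finset.univ_inter, Finset.sum_const, nsmul_eq_mul, mul_comm]

lemma shift_iter {N : ℕ} {A : Matrix (Fin N) (Fin N) ℝ} (k : ℕ) (x : SigmaA N A) (i : ℤ) :
    ((shiftA N A)^[k] x).1 i = x.1 (i + k) := by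
  induction k generalizing x with
  | zero => simp
  | succ k ih =>
    rw [Function.iterate_succ_apply, ih]
    change x.1 (i + k + 1) = _
    rw [show i + ((k + 1 : ℕ) : ℤ) = i + k + 1 by push_cast; ring]

/-- shift by an integer. -/
def zshift {N : ℕ} {A : Matrix (Fin N) (Fin N) ℝ} (c : ℤ) (x : SigmaA N A) : SigmaA N A :=
  ⟨fun i => x.1 (i + c), fun i => by
    have := x.2 (i + c)
    rwa [show i + c + 1 = i + 1 + c by ring] at this⟩

lemma cyl {N : ℕ} {A : Matrix (Fin N) (Fin N) ℝ} [MetricSpace (SigmaA N A)] [CompactSpace (SigmaA N A)]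
    (hc : ∀ i : ℤ, Continuous (fun x : SigmaA N A => x.1 i)) (ε : ℝ) (hε : 0 < ε) :
    ∃ M : ℕ, ∀ x y : SigmaA N A, (∀ i : ℤ, |i| ≤ M → x.1 i = y.1 i) → dist x y < ε := by
  let V : ℕ → Set (SigmaA N A × SigmaA N A) := fun M => {p | ∀ i : ℤ, |i| ≤ M → p.1.1 i = p.2.1 i}
  have hV : Antitone V := by
    intro a b hab p hp i hi
    exact hp i (hi.trans (by exact_mod_cast hab))
  have hcl : ∀ M, IsClosed (V M) := by
    intro M
    simp only [V, Set.ofPred_forall]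
    refine isClosed_iInter fun i => isClosed_iInter fun _ => ?_
    exact isClosed_eq ((hc i).comp continuous_fst) ((hc i).comp continuous_snd)
  obtain ⟨M, hM⟩ := exists_subset_nhds_of_compactSpace (V := V) (U := {p | dist p.1 p.2 < ε})
    hV.directed_ge hcl (by
      intro p hp
      have hpe : p.1 = p.2 := by
        apply Subtype.ext
        funext i
        have := Set.mem_iInter.1 hp i.natAbs
        exact this i (by simp)
      refine (isOpen_lt continuous_dist continuous_const).mem_nhds ?_
      simp [hpe, hε])
  exact ⟨M, fun x y h => hM (show (x, y) ∈ V M from h)⟩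

lemma sep_card_le {N : ℕ} {A : Matrix (Fin N) (Fin N) ℝ} [MetricSpace (SigmaA N A)] (ε : ℝ) (M : ℕ)
    (hM : ∀ x y : SigmaA N A, (∀ i : ℤ, |i| ≤ M → x.1 i = y.1 i) → dist x y < ε) (n : ℕ)
    (W : Finset (SigmaA N A)) (hW : IsSep (shiftA N A) n ε (W : Set (SigmaA N A))) :
    W.card ≤ (wordsA N A (n + 2 * M)).card := by
  refine Finset.card_le_card_of_injOn (fun x k => x.1 ((k : ℕ) - (M : ℤ))) ?_ ?_
  · intro x _
    simp only [Finset.mem_coe, mem_wordsA]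
    exact ⟨zshift (-M) x, fun k => by simp [zshift, sub_eq_add_neg]⟩
  · intro x hx y hy hxy
    by_contra hne
    obtain ⟨k, hk, hd⟩ := hW x hx y hy hne
    refine absurd (hM _ _ fun i hi => ?_) (not_lt.2 hd.le)
    rw [abs_le] at hi
    rw [shift_iter, shift_iter]
    have := congrFun hxy ⟨(i + k + M).toNat, by omega⟩
    simp only at this
    rwa [show (((i + k + M).toNat : ℕ) : ℤ) - M = i + k by omega] at this

lemma sepCount_le {N : ℕ} {A : Matrix (Fin N) (Fin N) ℝ} [MetricSpace (SigmaA N A)] (ε : ℝ) (M : ℕ)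
    (hM : ∀ x y : SigmaA N A, (∀ i : ℤ, |i| ≤ M → x.1 i = y.1 i) → dist x y < ε) (n : ℕ) :
    sepCount (shiftA N A) n ε ≤ (wordsA N A (n + 2 * M)).card := by
  refine csSup_le ⟨0, ∅, by simp [IsSep], rfl⟩ ?_
  rintro _ ⟨W, hW, rfl⟩
  exact sep_card_le ε M hM n W hW

lemma le_sepCount {N : ℕ} {A : Matrix (Fin N) (Fin N) ℝ} [MetricSpace (SigmaA N A)] (ε : ℝ) (M : ℕ)
    (hM : ∀ x y : SigmaA N A, (∀ i : ℤ, |i| ≤ M → x.1 i = y.1 i) → dist x y < ε) (n : ℕ)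
    (W : Finset (SigmaA N A)) (hW : IsSep (shiftA N A) n ε (W : Set (SigmaA N A))) :
    W.card ≤ sepCount (shiftA N A) n ε := by
  refine le_csSup ⟨(wordsA N A (n + 2 * M)).card, ?_⟩ ⟨W, hW, rfl⟩
  rintro _ ⟨W, hW, rfl⟩
  exact sep_card_le ε M hM n W hW

lemma exists_eps {N : ℕ} {A : Matrix (Fin N) (Fin N) ℝ} [MetricSpace (SigmaA N A)] [CompactSpace (SigmaA N A)]
    (hc : ∀ i : ℤ, Continuous (fun x : SigmaA N A => x.1 i)) :
    ∃ ε : ℝ, 0 < ε ∧ ∀ x y : SigmaA N A, dist x y ≤ ε → x.1 0 = y.1 0 := by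
  have h1 : Continuous (fun x : SigmaA N A => (((x.1 0 : Fin N) : ℕ) : ℝ)) :=
    (continuous_of_discreteTopology (f := fun a : Fin N => ((a : ℕ) : ℝ))).comp (hc 0)
  have h2 := CompactSpace.uniformContinuous_of_continuous h1
  obtain ⟨δ, hδ, h⟩ := Metric.uniformContinuous_iff.1 h2 1 one_pos
  refine ⟨δ / 2, by positivity, fun x y hxy => ?_⟩
  have := @h x y (by linarith)
  rw [Nat.dist_cast_real] at this
  by_contra hne
  have : 1 ≤ dist ((x.1 0 : Fin N) : ℕ) ((y.1 0 : Fin N) : ℕ) :=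
    Nat.pairwise_one_le_dist (fun h => hne (Fin.ext h))
  linarith

lemma words_le_sepCount {N : ℕ} {A : Matrix (Fin N) (Fin N) ℝ} [MetricSpace (SigmaA N A)] (ε : ℝ) (M : ℕ)
    (hM : ∀ x y : SigmaA N A, (∀ i : ℤ, |i| ≤ M → x.1 i = y.1 i) → dist x y < ε)
    (hε : ∀ x y : SigmaA N A, dist x y ≤ ε → x.1 0 = y.1 0) (n : ℕ) :
    (wordsA N A n).card ≤ sepCount (shiftA N A) (n + 1) ε := by
  classical
  have h : ∀ w : wordsA N A n, ∃ x : SigmaA N A, ∀ k : Fin (n+1), w.1 k = x.1 ((k : ℕ) : ℤ) :=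
    fun w => mem_wordsA.1 w.2
  choose f hf using h
  have hinj : Function.Injective f := by
    intro w w' hww
    apply Subtype.ext
    funext k
    rw [hf, hf, hww]
  have := le_sepCount ε M hM (n+1) (Finset.univ.image f) (by
    intro x hx y hy hne
    simp only [Finset.coe_image, Finset.coe_univ, Set.image_univ, Set.mem_range] at hx hy
    obtain ⟨w, rfl⟩ := hx
    obtain ⟨w', rfl⟩ := hy
    by_contra hcon
    push Not at hcon
    apply hne
    congr 1
    apply Subtype.ext
    funext k
    have := hε _ _ (hcon k k.2)
    rw [shift_iter, shift_iter, zero_add] at this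
    rw [hf, hf, this])
  rw [Finset.card_image_of_injective _ hinj] at this
  simpa using this

lemma compact_aux {N : ℕ} {A : Matrix (Fin N) (Fin N) ℝ} :
    CompactSpace {x : ℤ → Fin N // ∀ i : ℤ, A (x i) (x (i + 1)) = 1} := by
  apply isCompact_iff_compactSpace.1
  apply IsClosed.isCompact
  change IsClosed {x : ℤ → Fin N | ∀ i : ℤ, A (x i) (x (i + 1)) = 1}
  rw [Set.ofPred_forall]
  refine isClosed_iInter fun i => ?_
  have : Continuous (fun x : ℤ → Fin N => A (x i) (x (i+1))) :=
    Continuous.comp continuous_of_discreteTopology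
      (g := fun p : Fin N × Fin N => A p.1 p.2) (f := fun x : ℤ → Fin N => (x i, x (i+1)))
      ((continuous_apply i).prodMk (continuous_apply (i+1)))
  exact isClosed_eq this continuous_const

attribute [local instance] Matrix.linftyOpNormedRing Matrix.linftyOpNormedAlgebra

lemma entS_eq {N : ℕ} (A : Matrix (Fin N) (Fin N) ℝ) (n : ℕ) : entS A n = ∑ i, ∑ j, (A ^ n) i j := by
  simp [entS, dotProduct, Matrix.mulVec]

lemma norm_bounds {N : ℕ} (A : Matrix (Fin N) (Fin N) ℝ) (hA : ∀ i j, 0 ≤ A i j) (n : ℕ) :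
    ‖(A.map ((↑) : ℝ → ℂ)) ^ n‖ ≤ entS A n ∧ entS A n ≤ N * ‖(A.map ((↑) : ℝ → ℂ)) ^ n‖ := by
  have hp := pow_nonneg' A hA n
  have e : (A.map ((↑) : ℝ → ℂ)) ^ n = (A ^ n).map ((↑) : ℝ → ℂ) := by
    have := (Matrix.map_pow A Complex.ofRealHom n)
    exact this.symm
  have hr : ∀ i, ((∑ j, ‖((A ^ n).map ((↑) : ℝ → ℂ)) i j‖₊ : NNReal) : ℝ) = ∑ j, (A ^ n) i j := by
    intro i
    push_cast
    refine Finset.sum_congr rfl fun j _ => ?_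
    simp [abs_of_nonneg (hp i j)]
  rw [e, entS_eq, Matrix.linfty_opNorm_def]
  constructor
  · have h0 : (0:ℝ) ≤ ∑ i, ∑ j, (A ^ n) i j := Finset.sum_nonneg fun i _ => Finset.sum_nonneg fun j _ => hp i j
    rw [← NNReal.coe_mk _ h0, NNReal.coe_le_coe]
    refine Finset.sup_le fun i _ => ?_
    rw [← NNReal.coe_le_coe, hr]
    exact Finset.single_le_sum (f := fun i => ∑ j, (A ^ n) i j)
      (fun i _ => Finset.sum_nonneg fun j _ => hp i j) (Finset.mem_univ i)
  · have := Finset.sum_le_card_nsmul Finset.univ (fun i => ∑ j, (A ^ n) i j)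
      (((Finset.univ.sup fun i => ∑ j, ‖((A ^ n).map ((↑) : ℝ → ℂ)) i j‖₊ : NNReal) : ℝ)) (by
        intro i _
        simp only [← hr]
        exact NNReal.coe_le_coe.2 (Finset.le_sup (f := fun i => ∑ j, ‖((A ^ n).map ((↑) : ℝ → ℂ)) i j‖₊) (Finset.mem_univ i)))
    simpa using this

lemma shift_lim (f : ℕ → ℝ) (l : ℝ) (hf : Tendsto (fun n : ℕ => f n / n) atTop (nhds l)) (c d : ℕ) (b : ℝ) :
    Tendsto (fun n : ℕ => (f (n + c) - b) / ((n + d : ℕ) : ℝ)) atTop (nhds l) := by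
  have hd : Tendsto (fun n : ℕ => ((n + d : ℕ) : ℝ)) atTop atTop :=
    tendsto_natCast_atTop_atTop.comp (tendsto_add_atTop_nat d)
  have h1 := hf.comp (tendsto_add_atTop_nat c)
  have h2 : Tendsto (fun n : ℕ => 1 + ((c : ℝ) - d) / ((n + d : ℕ) : ℝ)) atTop (nhds 1) := by
    simpa using (tendsto_const_nhds (x := (1:ℝ))).add ((tendsto_const_nhds (x := (c:ℝ) - d)).div_atTop hd)
  have h3 : Tendsto (fun n : ℕ => b / ((n + d : ℕ) : ℝ)) atTop (nhds 0) :=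
    (tendsto_const_nhds).div_atTop hd
  have h4 := (h1.mul h2).sub h3
  simp only [mul_one, sub_zero] at h4
  refine h4.congr' ?_
  filter_upwards [eventually_gt_atTop 0] with n hn
  have : (0:ℝ) < n := by exact_mod_cast hn
  simp only [Function.comp]
  push_cast
  field_simp
  ring

lemma gelfand_real {N : ℕ} (A : Matrix (Fin N) (Fin N) ℝ) (ρ : ℝ)
    (hρ : ρ = (spectralRadius ℂ (A.map ((↑) : ℝ → ℂ))).toReal) :
    Tendsto (fun n : ℕ => ‖(A.map ((↑) : ℝ → ℂ)) ^ n‖ ^ (1 / (n : ℝ))) atTop (nhds ρ) := by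
  have h := spectrum.pow_norm_pow_one_div_tendsto_nhds_spectralRadius (A.map ((↑) : ℝ → ℂ))
  have hfin : spectralRadius ℂ (A.map ((↑) : ℝ → ℂ)) ≠ ⊤ := by
    refine ne_top_of_le_ne_top ?_ (spectrum.spectralRadius_le_pow_nnnorm_pow_one_div ℂ (A.map ((↑) : ℝ → ℂ)) 0)
    simp [ENNReal.mul_eq_top]
  have h2 := (ENNReal.tendsto_toReal hfin).comp h
  rw [hρ]
  refine h2.congr fun n => ?_
  simp only [Function.comp]
  rw [ENNReal.toReal_ofReal (by positivity)]

lemma rho_zero {N : ℕ} (A : Matrix (Fin N) (Fin N) ℝ) (hA : ∀ i j, 0 ≤ A i j) (c : ℕ)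
    (h : ∀ n, entS A (n + c) ≤ 0) : (spectralRadius ℂ (A.map ((↑) : ℝ → ℂ))).toReal = 0 := by
  refine tendsto_nhds_unique (gelfand_real A _ rfl) ?_
  refine tendsto_const_nhds.congr' ?_
  filter_upwards [eventually_gt_atTop c] with n hn
  have h1 := (norm_bounds A hA n).1
  have h2 := h (n - c)
  rw [Nat.sub_add_cancel hn.le] at h2
  have h3 : ‖(A.map ((↑) : ℝ → ℂ)) ^ n‖ = 0 := le_antisymm (h1.trans h2) (norm_nonneg _)
  rw [h3, Real.zero_rpow]
  have : (n : ℝ) ≠ 0 := by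
    have : n ≠ 0 := by omega
    exact_mod_cast this
  positivity

lemma log_lim {N : ℕ} (A : Matrix (Fin N) (Fin N) ℝ) (hA : ∀ i j, 0 ≤ A i j)
    (h : ∀ n, 1 ≤ entS A n) :
    Tendsto (fun n : ℕ => Real.log (entS A n) / n) atTop
      (nhds (Real.log (spectralRadius ℂ (A.map ((↑) : ℝ → ℂ))).toReal)) := by
  set B := A.map ((↑) : ℝ → ℂ) with hB
  have hN : (0:ℝ) < N := by
    rcases Nat.eq_zero_or_pos N with h0 | h0
    · subst h0
      have := h 0
      simp [entS_eq] at this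
      linarith
    · exact_mod_cast h0
  have hg := gelfand_real A _ rfl
  rw [← hB] at hg
  have hinv : Tendsto (fun n : ℕ => 1 / (n : ℝ)) atTop (nhds 0) := tendsto_one_div_atTop_nhds_zero_nat
  have hlow : ∀ n, 1 / (N:ℝ) ≤ ‖B ^ n‖ := fun n => by
    rw [div_le_iff₀' hN]
    exact (h n).trans (norm_bounds A hA n).2
  have hpos : ∀ n, 0 < ‖B ^ n‖ := fun n => lt_of_lt_of_le (by positivity) (hlow n)
  have h1 : 1 ≤ (spectralRadius ℂ B).toReal := by
    have hl : Tendsto (fun n : ℕ => (1 / (N:ℝ)) ^ (1 / (n : ℝ))) atTop (nhds 1) := by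
      have := (tendsto_const_nhds (x := 1 / (N:ℝ))).rpow hinv (Or.inl (by positivity))
      simpa using this
    refine le_of_tendsto_of_tendsto' hl hg fun n => ?_
    exact Real.rpow_le_rpow (by positivity) (hlow n) (by positivity)
  have hl := hg.log (by positivity)
  have hl' : Tendsto (fun n : ℕ => Real.log ‖B ^ n‖ / n) atTop (nhds (Real.log (spectralRadius ℂ B).toReal)) := by
    refine hl.congr fun n => ?_
    rw [Real.log_rpow (hpos n)]
    ring
  have hu := shift_lim (fun n => Real.log ‖B ^ n‖) _ hl' 0 0 (-Real.log N)
  refine tendsto_of_tendsto_of_tendsto_of_le_of_le hl' hu (fun n => ?_) (fun n => ?_)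
  · have := Real.log_le_log (hpos n) (norm_bounds A hA n).1
    simp only
    gcongr
  · have := Real.log_le_log (by linarith [h n]) (norm_bounds A hA n).2
    rw [Real.log_mul hN.ne' (hpos n).ne'] at this
    simp only [add_zero]
    gcongr
    linarith

lemma main_aux {N : ℕ} (A : Matrix (Fin N) (Fin N) ℝ)
    (h01 : ∀ i j, A i j = 0 ∨ A i j = 1) [MetricSpace (SigmaA N A)] [CompactSpace (SigmaA N A)]
    (hc : ∀ i : ℤ, Continuous (fun x : SigmaA N A => x.1 i)) :
    topEnt (shiftA N A)
      = ((Real.log ((spectralRadius ℂ (A.map ((↑) : ℝ → ℂ))).toReal) : ℝ) : EReal) := by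
  have hA : ∀ i j, 0 ≤ A i j := fun i j => by rcases h01 i j with h | h <;> simp [h]
  obtain ⟨c, C, hC, hcC⟩ := le_words A h01
  rcases isEmpty_or_nonempty (SigmaA N A) with hemp | ⟨⟨x0⟩⟩
  · have hw : ∀ n, (wordsA N A n).card = 0 := fun n => by
      rw [Finset.card_eq_zero, Finset.eq_empty_iff_forall_notMem]
      intro w hw
      obtain ⟨x, _⟩ := mem_wordsA.1 hw
      exact hemp.elim x
    rw [rho_zero A hA c fun n => by simpa [hw] using hcC n]
    have hs : ∀ n ε, sepCount (shiftA N A) n ε = 0 := fun n ε => by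
      have := sepCount_le (A := A) ε 0 (fun x => hemp.elim x) n
      rw [hw] at this
      omega
    simp only [topEnt, hs]
    simp only [Nat.cast_zero, Real.log_zero, zero_div, EReal.coe_zero, limsup_const]
    exact le_antisymm (iSup₂_le fun _ _ => le_rfl) (le_iSup₂_of_le 1 one_pos le_rfl)
  · have hw1 : ∀ n, (1:ℝ) ≤ (wordsA N A n).card := fun n => by
      have : 0 < (wordsA N A n).card := Finset.card_pos.2
        ⟨fun k => x0.1 ((k : ℕ) : ℤ), mem_wordsA.2 ⟨x0, fun _ => rfl⟩⟩
      exact_mod_cast this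
    have hS1 : ∀ n, 1 ≤ entS A n := fun n => (hw1 n).trans (words_le A h01 n)
    have hlim := log_lim A hA hS1
    apply le_antisymm
    · refine iSup₂_le fun ε hε => ?_
      obtain ⟨M, hM⟩ := cyl hc ε hε
      have h1 := shift_lim (fun n => Real.log (entS A n)) _ hlim (2 * M) 0 0
      have h2 := (continuous_coe_real_ereal.tendsto _).comp h1
      rw [← h2.limsup_eq]
      refine limsup_le_limsup (Eventually.of_forall fun n => ?_)
      simp only [Function.comp, EReal.coe_le_coe_iff, sub_zero, add_zero]
      have hsc : 1 ≤ sepCount (shiftA N A) n ε := by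
        have := le_sepCount ε M hM n {x0} (by
          intro x hx y hy hne
          simp only [Finset.coe_singleton, Set.mem_singleton_iff] at hx hy
          exact absurd (hx.trans hy.symm) hne)
        simpa using this
      have hle : (sepCount (shiftA N A) n ε : ℝ) ≤ entS A (n + 2 * M) :=
        le_trans (by exact_mod_cast sepCount_le ε M hM n) (words_le A h01 _)
      have h3 := Real.log_le_log (by exact_mod_cast hsc) hle
      gcongr
    · obtain ⟨ε, hε, hε0⟩ := exists_eps hc
      obtain ⟨M, hM⟩ := cyl hc ε hε
      refine le_iSup₂_of_le ε hε ?_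
      rw [← limsup_nat_add _ 1]
      have h1 := shift_lim (fun n => Real.log (entS A n)) _ hlim c 1 (Real.log C)
      have h2 := (continuous_coe_real_ereal.tendsto _).comp h1
      rw [← h2.limsup_eq]
      refine limsup_le_limsup (Eventually.of_forall fun n => ?_)
      simp only [Function.comp, EReal.coe_le_coe_iff]
      have hle : ((wordsA N A n).card : ℝ) ≤ sepCount (shiftA N A) (n + 1) ε := by
        exact_mod_cast words_le_sepCount ε M hM hε0 n
      have h3 := Real.log_le_log (by linarith [hw1 n]) hle
      have h4 := Real.log_le_log (by linarith [hS1 (n + c)]) (hcC n)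
      rw [Real.log_mul hC.ne' (by linarith [hw1 n])] at h4
      gcongr
      linarith

/-- The topological entropy of a subshift of finite type `σ : Σ_A → Σ_A` equals the logarithm
of the spectral radius of its `0`-`1` transition matrix `A`, for any metric on `Σ_A`
compatible with the (subspace of the product) topology. -/
theorem entropy_SFT (N : ℕ) (A : Matrix (Fin N) (Fin N) ℝ)
    (h01 : ∀ i j, A i j = 0 ∨ A i j = 1)
    (m : MetricSpace (SigmaA N A))
    (hcompat : m.toUniformSpace.toTopologicalSpace
      = (inferInstance : TopologicalSpace {x : ℤ → Fin N // ∀ i : ℤ, A (x i) (x (i + 1)) = 1})) :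
    @topEnt _ m.toPseudoMetricSpace (shiftA N A)
      = ((Real.log ((spectralRadius ℂ (A.map ((↑) : ℝ → ℂ))).toReal) : ℝ) : EReal) := by
  have hcomp : @CompactSpace (SigmaA N A) m.toUniformSpace.toTopologicalSpace := by
    rw [hcompat]
    exact compact_aux
  have hc : ∀ i : ℤ, @Continuous _ _ m.toUniformSpace.toTopologicalSpace _
      (fun x : SigmaA N A => x.1 i) := by
    intro i
    rw [hcompat]
    have h : Continuous (fun x : {x : ℤ → Fin N // ∀ i : ℤ, A (x i) (x (i + 1)) = 1} => x.1 i) :=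
      (continuous_apply i).comp continuous_subtype_val
    exact h
  exact main_aux A h01 hc
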